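/- For every prime p and all integers a ≥ b ≥ c, one has (Φ_p(a,b,c) * φ₀)(e) ≥ p^{a−c}, where e is the identity of GL_3(ℚ_p). -/

import Mathlib

open MeasureTheory

noncomputable section

variable (p : ℕ) [Fact p.Prime]

/-- The diagonal element `diag(p^a, p^b, p^c)` of `GL₃(ℚ_p)`. -/
def padicDiag (a b c : ℤ) : GL (Fin 3) ℚ_[p] := by
  have hp : (p : ℚ_[p]) ≠ 0 := by
    exact_mod_cast (Nat.cast_ne_zero (R := ℚ_[p])).mpr (Fact.out : p.Prime).ne_zero
  refine ⟨Matrix.diagonal ![(p : ℚ_[p]) ^ a, (p : ℚ_[p]) ^ b, (p : ℚ_[p]) ^ c],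
    Matrix.diagonal ![(p : ℚ_[p]) ^ (-a), (p : ℚ_[p]) ^ (-b), (p : ℚ_[p]) ^ (-c)], ?_, ?_⟩ <;>
  · rw [Matrix.diagonal_mul_diagonal]
    ext i j
    fin_cases i <;> fin_cases j <;>
      simp [zpow_neg, mul_inv_cancel₀ (zpow_ne_zero _ hp), inv_mul_cancel₀ (zpow_ne_zero _ hp)]

/-- `K_p = GL₃(ℤ_p)`, viewed as the image of `GL₃(ℤ_p)` inside `GL₃(ℚ_p)`. -/
def padicK : Set (GL (Fin 3) ℚ_[p]) :=
  Set.range fun u : (Matrix (Fin 3) (Fin 3) ℤ_[p])ˣ =>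
    Units.map (RingHom.toMonoidHom (RingHom.mapMatrix (PadicInt.Coe.ringHom (p := p)))) u

/-- The double coset `K_p · diag(p^a, p^b, p^c) · K_p`. -/
def padicDoubleCoset (a b c : ℤ) : Set (GL (Fin 3) ℚ_[p]) :=
  {x | ∃ k₁ ∈ padicK p, ∃ k₂ ∈ padicK p, x = k₁ * padicDiag p a b c * k₂}

/-- `Φ_p(a,b,c)`: the characteristic function of `K_p(a,b,c)`. -/
def padicPhi (a b c : ℤ) : GL (Fin 3) ℚ_[p] → ℝ :=
  (padicDoubleCoset p a b c).indicator fun _ => (1 : ℝ)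

instance : MeasurableSpace (GL (Fin 3) ℚ_[p]) := borel _

/-- Convolution of functions on `GL₃(ℚ_p)` with respect to a measure `μ`. -/
def padicConv (μ : Measure (GL (Fin 3) ℚ_[p])) (f h : GL (Fin 3) ℚ_[p] → ℝ) :
    GL (Fin 3) ℚ_[p] → ℝ :=
  fun x => ∫ y, f y * h (y⁻¹ * x) ∂μ

/-- `A_p` is the `p`-adic Iwasawa `A`-coordinate: whenever `g = b·k` with `b` upper
triangular and `k ∈ K_p`, it returns the triple of `p`-adic valuations of the diagonal
entries of `b`. -/
def IsPadicIwasawaCoord (Ap : GL (Fin 3) ℚ_[p] → ℤ × ℤ × ℤ) : Prop :=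
  ∀ g b : GL (Fin 3) ℚ_[p], ∀ k ∈ padicK p,
    (∀ i j : Fin 3, (j : ℕ) < (i : ℕ) → (b : Matrix (Fin 3) (Fin 3) ℚ_[p]) i j = 0) →
    g = b * k →
    Ap g = (((b : Matrix (Fin 3) (Fin 3) ℚ_[p]) 0 0).valuation,
            ((b : Matrix (Fin 3) (Fin 3) ℚ_[p]) 1 1).valuation,
            ((b : Matrix (Fin 3) (Fin 3) ℚ_[p]) 2 2).valuation)

/-- The spherical function with trivial Satake parameter,
`φ₀(g) = ∫_{K_p} p^{ρ(A_p(kg))} dk`, where `ρ(a,b,c) = a − c` and the Haar probability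
measure on `K_p` is realized as the restriction of `μ` (normalized by `μ(K_p) = 1`)
to `K_p`. -/
def padicPhiZero (μ : Measure (GL (Fin 3) ℚ_[p])) (Ap : GL (Fin 3) ℚ_[p] → ℤ × ℤ × ℤ) :
    GL (Fin 3) ℚ_[p] → ℝ :=
  fun g => ∫ k in padicK p, (p : ℝ) ^ ((Ap (k * g)).1 - (Ap (k * g)).2.2) ∂μ

/-! Write `K = GL₃(ℤ_p)` and `D = diag(p^a, p^b, p^c)`. The convolution at the identity is the
integral of `φ₀(y⁻¹)` over `y ∈ K D K`.

* Let `g ∈ K D⁻¹ K` with `g = b k`. The entries of `b ∈ K D⁻¹ K` and of `b⁻¹ ∈ K D K` have norm at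
  most `p^a` and `p^(-c)`, so `p^ρ(A(g)) = ‖b₃₃‖ / ‖b₁₁‖ = 1 / (‖b₁₁‖ ‖b⁻¹₃₃‖) ≥ p^(c-a)`. Hence
  `φ₀(y⁻¹) ≥ p^(c-a)` on `K D K`.
* If `u` runs through the upper unitriangular matrices whose `(i, j)` entry is an integer between
  `0` and `p^(l_i - l_j) - 1`, where `l = (a, b, c)`, then the left cosets `u D K ⊆ K D K` are
  distinct. There are `p^((a-b) + (a-c) + (b-c)) = p^(2(a-c))` of them, so `K D K` has at least this
  volume.

The product of the two bounds is `p^(a-c)`. -/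

open Matrix DoubleCoset
open scoped Pointwise

section Cosets

variable {G : Type*} [Group G] {K : Subgroup G}

theorem inv_mem_doubleCoset_inv {x g : G} (hg : g ∈ doubleCoset x K K) :
    g⁻¹ ∈ doubleCoset x⁻¹ (K : Set G) K := by
  obtain ⟨k₁, h₁, k₂, h₂, rfl⟩ := mem_doubleCoset.1 hg
  exact mem_doubleCoset.2 ⟨k₂⁻¹, K.inv_mem h₂, k₁⁻¹, K.inv_mem h₁, by group⟩

theorem mul_mem_doubleCoset {x g k k' : G} (hk : k ∈ K) (hg : g ∈ doubleCoset x K K)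
    (hk' : k' ∈ K) : k * g * k' ∈ doubleCoset x (K : Set G) K := by
  obtain ⟨k₁, h₁, k₂, h₂, rfl⟩ := mem_doubleCoset.1 hg
  exact mem_doubleCoset.2 ⟨k * k₁, K.mul_mem hk h₁, k₂ * k', K.mul_mem h₂ hk', by group⟩

theorem continuous_of_forall_mul_mem_eq {X : Type*} [TopologicalSpace G] [ContinuousMul G]
    [TopologicalSpace X] (hK : IsOpen (K : Set G)) {f : G → X}
    (hf : ∀ g, ∀ k ∈ K, f (g * k) = f g) : Continuous f := by
  have : DiscreteTopology (G ⧸ K) := QuotientGroup.discreteTopology hK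
  have hlift : ∀ g h, QuotientGroup.leftRel K g h → f g = f h := fun g h hgh ↦ by
    simpa using (hf g _ (QuotientGroup.leftRel_apply.1 hgh)).symm
  exact (continuous_of_discreteTopology (f := fun q : G ⧸ K ↦ Quotient.liftOn' q f hlift)).comp
    QuotientGroup.continuous_mk

theorem card_mul_measure_le_of_injective_mk [MeasurableSpace G] [MeasurableMul G] (μ : Measure G)
    [μ.IsMulLeftInvariant] (hK : MeasurableSet (K : Set G)) {ι : Type*} [Fintype ι] {u : ι → G}
    (hu : Function.Injective fun i ↦ (u i : G ⧸ K)) {S : Set G}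
    (hS : ∀ i, ∀ k ∈ K, u i * k ∈ S) : Fintype.card ι * μ K ≤ μ S := by
  have hdisj : Pairwise (Function.onFun Disjoint fun i ↦ u i • (K : Set G)) := fun i j hij ↦ by
    refine Set.disjoint_left.2 fun g hi hj ↦ hij (hu (QuotientGroup.eq.2 ?_))
    rw [mem_leftCoset_iff] at hi hj
    simpa [mul_assoc] using K.mul_mem hi (K.inv_mem hj)
  calc Fintype.card ι * μ K = μ (⋃ i, u i • (K : Set G)) := by
        rw [measure_iUnion hdisj fun i ↦ hK.const_smul (u i)]
        simp [measure_smul]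
    _ ≤ μ S := measure_mono <| Set.iUnion_subset fun i ↦ by
        rintro _ ⟨k, hk, rfl⟩
        exact hS i k hk

end Cosets

variable {n : Type*} [Fintype n] [DecidableEq n]

section Triangular

variable {R : Type*} [CommRing R]

/-- The diagonal matrix with given invertible entries, as an element of `GL`. -/
def diagonalGL (d : n → Rˣ) : GL n R :=
  Units.map (diagonalRingHom n R).toMonoidHom (MulEquiv.piUnits.symm d)

theorem coe_diagonalGL (d : n → Rˣ) :
    (diagonalGL d : Matrix n n R) = diagonal fun i ↦ (d i : R) := rfl

theorem diagonalGL_inv (d : n → Rˣ) : (diagonalGL d)⁻¹ = diagonalGL d⁻¹ := rfl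

variable [LinearOrder n]

theorem apply_self_mul_inv_apply_self_of_isUpperTriangular {b : GL n R}
    (hb : (b : Matrix n n R).IsUpperTriangular) (i : n) : b i i * b⁻¹ i i = 1 := by
  have : Invertible (b : Matrix n n R) := b.invertible
  have hinv : ((b⁻¹ : GL n R) : Matrix n n R).IsUpperTriangular := by
    rw [GeneralLinearGroup.coe_inv]
    exact blockTriangular_inv_of_blockTriangular hb
  calc b i i * b⁻¹ i i = ((b : Matrix n n R) * (b⁻¹ : GL n R)) i i := by
        rw [mul_apply, Finset.sum_eq_single i (fun l _ hl ↦ ?_) (by simp)]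
        rcases hl.lt_or_gt with h | h
        · rw [hb h, zero_mul]
        · rw [hinv h, mul_zero]
    _ = 1 := by rw [Units.mul_inv, one_apply_eq]

/-- Upper triangular matrices with ones on the diagonal. -/
def IsUpperUnitriangular (M : Matrix n n R) : Prop :=
  M.IsUpperTriangular ∧ ∀ i, M i i = 1

/-- The upper unitriangular matrix with prescribed entries above the diagonal, as an element of
`SL`, so that it can be mapped to `GL` over any algebra. -/
def unitriangular (x : ∀ i : n, {j // i < j} → R) : SpecialLinearGroup n R :=
  ⟨of fun i j ↦ if h : i < j then x i ⟨j, h⟩ else (1 : Matrix n n R) i j, by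
    rw [det_of_isUpperTriangular fun i j (hij : j < i) ↦ ?_]
    · simp
    · simp [hij.not_gt, hij.ne']⟩

variable {S : Type*} [CommRing S] [Algebra R S] (x : ∀ i : n, {j // i < j} → R)

theorem mapGL_unitriangular_apply_of_lt {i j : n} (h : i < j) :
    SpecialLinearGroup.mapGL S (unitriangular x) i j = algebraMap R S (x i ⟨j, h⟩) :=
  congrArg (algebraMap R S) (dif_pos h)

theorem isUpperUnitriangular_mapGL_unitriangular :
    IsUpperUnitriangular (SpecialLinearGroup.mapGL S (unitriangular x) : Matrix n n S) := by
  rw [SpecialLinearGroup.mapGL_coe_matrix, SpecialLinearGroup.map_apply_coe]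
  exact ⟨fun i j (hij : j < i) ↦ by simp [unitriangular, hij.not_gt, hij.ne'],
    fun i ↦ by simp [unitriangular]⟩

end Triangular

section Integral

variable {F Γ₀ : Type*} [Field F] [LinearOrderedCommGroupWithZero Γ₀] (v : Valuation F Γ₀)

variable (n) in
/-- `GL n 𝒪` as a subgroup of `GL n F`, where `𝒪` is the valuation ring of `v`. -/
def integralGL : Subgroup (GL n F) :=
  (v.integer.matrix (n := n)).toSubmonoid.units

variable {v}

theorem mem_integralGL {g : GL n F} :
    g ∈ integralGL n v ↔ (∀ i j, v (g i j) ≤ 1) ∧ ∀ i j, v (g⁻¹ i j) ≤ 1 := Iff.rfl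

theorem mapGL_int_mem_integralGL (g : SpecialLinearGroup n ℤ) :
    SpecialLinearGroup.mapGL F g ∈ integralGL n v := by
  have hint (h : SpecialLinearGroup n ℤ) (i j : n) :
      v ((SpecialLinearGroup.mapGL F h : Matrix n n F) i j) ≤ 1 :=
    intCast_mem v.integer (h i j)
  exact mem_integralGL.2 ⟨hint g, by rw [← map_inv]; exact hint g⁻¹⟩

theorem map_single_one_le {ι : Type*} [DecidableEq ι] (a i : ι) :
    v ((Pi.single a 1 : ι → F) i) ≤ 1 := by
  rw [Pi.single_apply]
  split_ifs <;> simp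

/-- Multiplication by `1 + x yᵀ`, which is unipotent because `yᵀ x = 0`. -/
theorem exists_mem_integralGL_mul_apply {x y : n → F} (hx : ∀ i, v (x i) ≤ 1)
    (hy : ∀ i, v (y i) ≤ 1) (hyx : y ⬝ᵥ x = 0) :
    ∃ k ∈ integralGL n v, ∀ (g : GL n F) i j, (g * k) i j = g i j + (g i ⬝ᵥ x) * y j := by
  have hsq : vecMulVec x y * vecMulVec x y = 0 := by
    rw [vecMulVec_mul_vecMulVec, hyx]; simp
  have hmem : vecMulVec x y ∈ v.integer.matrix := fun i j ↦ v.integer.mul_mem (hx i) (hy j)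
  let k : GL n F := ⟨1 + vecMulVec x y, 1 - vecMulVec x y,
    by simp [mul_sub, add_mul, hsq], by simp [mul_add, sub_mul, hsq]⟩
  refine ⟨k, ⟨add_mem (one_mem _) hmem, sub_mem (one_mem _) hmem⟩, fun g i j ↦ ?_⟩
  change ((g : Matrix n n F) * (1 + vecMulVec x y)) i j = _
  rw [mul_add, mul_one, mul_vecMulVec]
  rfl

section Iwasawa

variable [LinearOrder n]

theorem exists_mem_integralGL_pivot (v : Valuation F Γ₀) (g : GL n F) (a : n) :
    ∃ k ∈ integralGL n v, (∀ i ≤ a, v ((g * k) a i) ≤ v ((g * k) a a)) ∧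
      ∀ r, (∀ i ≤ a, g r i = 0) → ∀ i, (g * k) r i = g r i := by
  obtain ⟨m, hma, hmax⟩ := Finset.exists_max_image (Finset.univ.filter (· ≤ a))
    (fun i ↦ v (g a i)) ⟨a, by simp⟩
  simp only [Finset.mem_filter, Finset.mem_univ, true_and] at hma hmax
  rcases (hmax a le_rfl).lt_or_eq with hlt | heq
  · have hne : a ≠ m := by rintro rfl; exact hlt.false
    obtain ⟨k, hk, hmul⟩ := exists_mem_integralGL_mul_apply (v := v)
      (map_single_one_le m) (map_single_one_le a)
      (by simp [hne.symm])
    simp only [dotProduct_single_one] at hmul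
    refine ⟨k, hk, fun i hi ↦ ?_, fun r hr i ↦ by rw [hmul, hr m hma, zero_mul, add_zero]⟩
    have hpivot : v ((g * k) a a) = v (g a m) := by
      rw [hmul, Pi.single_eq_same, mul_one, v.map_add_eq_of_lt_right hlt]
    rcases eq_or_ne i a with rfl | hia
    · rfl
    · rw [hpivot, hmul, Pi.single_eq_of_ne hia, mul_zero, add_zero]
      exact hmax i hi
  · exact ⟨1, one_mem _, by simpa [heq] using hmax, by simp⟩

theorem exists_mem_integralGL_clear {g : GL n F} {a : n} (hg : ∀ i ≤ a, v (g a i) ≤ v (g a a)) :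
    ∃ k ∈ integralGL n v, (∀ i < a, (g * k) a i = 0) ∧
      ∀ r, (∀ i ≤ a, g r i = 0) → ∀ i, (g * k) r i = g r i := by
  let y : n → F := fun i ↦ if i < a then -(g a i / g a a) else 0
  have hy (i : n) : v (y i) ≤ 1 := by
    by_cases hi : i < a
    · simpa [y, hi] using div_le_one_of_le₀ (hg i hi.le) zero_le
    · simp [y, hi]
  obtain ⟨k, hk, hmul⟩ := exists_mem_integralGL_mul_apply (map_single_one_le a) hy (by simp [y])
  simp only [dotProduct_single_one] at hmul
  refine ⟨k, hk, fun i hi ↦ ?_, fun r hr i ↦ by rw [hmul, hr a le_rfl, zero_mul, add_zero]⟩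
  have hzero : g a a = 0 → g a i = 0 := fun h ↦ by simpa [h] using hg i hi.le
  rw [hmul, show y i = -(g a i / g a a) from if_pos hi, mul_neg,
    mul_div_cancel_of_imp' hzero, add_neg_cancel]

theorem exists_mem_integralGL_isUpperTriangular_mul (v : Valuation F Γ₀) (g : GL n F) :
    ∃ k ∈ integralGL n v, ((g * k : GL n F) : Matrix n n F).IsUpperTriangular := by
  suffices h : ∀ s : Finset n, ∃ k ∈ integralGL n v, ∀ r ∈ s, ∀ i < r, (g * k) r i = 0 by
    obtain ⟨k, hk, htri⟩ := h Finset.univ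
    exact ⟨k, hk, fun r i hir ↦ htri r (Finset.mem_univ r) i hir⟩
  intro s
  induction s using Finset.induction_on_min with
  | empty => exact ⟨1, one_mem _, by simp⟩
  | insert a s ha ih =>
    obtain ⟨k, hk, hs⟩ := ih
    obtain ⟨k₁, hk₁, hpivot, hfix₁⟩ := exists_mem_integralGL_pivot v (g * k) a
    obtain ⟨k₂, hk₂, hclear, hfix₂⟩ := exists_mem_integralGL_clear hpivot
    refine ⟨k * k₁ * k₂, mul_mem (mul_mem hk hk₁) hk₂, fun r hr i hir ↦ ?_⟩
    rw [← mul_assoc, ← mul_assoc]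
    rcases Finset.mem_insert.1 hr with rfl | hr
    · exact hclear i hir
    · have hzero : ∀ j ≤ a, (g * k) r j = 0 := fun j hj ↦ hs r hr j (hj.trans_lt (ha r hr))
      rw [hfix₂ r (fun j hj ↦ by rw [hfix₁ r hzero, hzero j hj]), hfix₁ r hzero]
      exact hs r hr i hir

end Iwasawa

theorem map_apply_le_of_mem_doubleCoset {d : n → Fˣ} {r : Γ₀} (hd : ∀ i, v (d i) ≤ r)
    {g : GL n F} (hg : g ∈ doubleCoset (diagonalGL d) (integralGL n v) (integralGL n v))
    (i j : n) : v (g i j) ≤ r := by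
  obtain ⟨k₁, h₁, k₂, h₂, rfl⟩ := mem_doubleCoset.1 hg
  change v (((k₁ : Matrix n n F) * diagonalGL d * k₂) i j) ≤ r
  rw [mul_apply]
  refine v.map_sum_le fun l _ ↦ ?_
  rw [coe_diagonalGL, mul_diagonal, map_mul, map_mul]
  calc v (k₁ i l) * v (d l) * v (k₂ l j) ≤ 1 * r * 1 :=
        mul_le_mul' (mul_le_mul' ((mem_integralGL.1 h₁).1 i l) (hd l)) ((mem_integralGL.1 h₂).1 l j)
    _ = r := by rw [one_mul, mul_one]

theorem map_inv_mul_apply_le_of_mk_mul_diagonalGL_eq {d : n → Fˣ} {u u' : GL n F}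
    (hmk : (↑(u' * diagonalGL d) : GL n F ⧸ integralGL n v) = ↑(u * diagonalGL d)) (i j : n) :
    v ((u'⁻¹ * u) i j) ≤ v (d i / d j) := by
  let k := (u' * diagonalGL d)⁻¹ * (u * diagonalGL d)
  have hk : v (k i j) ≤ 1 := (mem_integralGL.1 (QuotientGroup.eq.1 hmk)).1 i j
  have hconj : u'⁻¹ * u = diagonalGL d * k * diagonalGL d⁻¹ := by
    rw [← diagonalGL_inv]; simp only [k]; group
  have hentry : (u'⁻¹ * u) i j = d i * k i j * (d j : F)⁻¹ := by
    rw [hconj, ← Units.val_inv_eq_inv_val]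
    simp [coe_diagonalGL]
  rw [hentry, div_eq_mul_inv, map_mul, map_mul, map_mul]
  gcongr
  exact mul_le_of_le_one_right' hk

/-- Since `u' * (w - 1) = u - u'` for `w = u'⁻¹ * u`, the rows of `w - 1` vanish one after the
other, from the last to the first. -/
theorem eq_of_mk_mul_diagonalGL_eq [LinearOrder n] {d : n → Fˣ} {u u' : GL n F}
    (hu : IsUpperUnitriangular (u : Matrix n n F))
    (hu' : IsUpperUnitriangular (u' : Matrix n n F))
    (hmk : (↑(u' * diagonalGL d) : GL n F ⧸ integralGL n v) = ↑(u * diagonalGL d))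
    (hsep : ∀ i j, i < j → v (u i j - u' i j) ≤ v (d i / d j) → u i j = u' i j) : u = u' := by
  let z : Matrix n n F := (u'⁻¹ * u : GL n F) - 1
  have huz : (u' : Matrix n n F) * z = u - u' := by
    simp [z, mul_sub, ← mul_assoc]
  have hz (i : n) : ∀ j, z i j = 0 := by
    induction i using WellFoundedGT.induction with
    | ind i ih =>
      have hrow (j : n) : z i j = u i j - u' i j := by
        rw [← Matrix.sub_apply, ← huz, mul_apply,
          Finset.sum_eq_single i (fun l _ hl ↦ ?_) (by simp), hu'.2 i, one_mul]
        rcases hl.lt_or_gt with h | h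
        · rw [hu'.1 h, zero_mul]
        · rw [ih l h, mul_zero]
      intro j
      rw [hrow, sub_eq_zero]
      rcases lt_trichotomy i j with h | rfl | h
      · refine hsep i j h ?_
        rw [← hrow]
        simpa [z, h.ne] using map_inv_mul_apply_le_of_mk_mul_diagonalGL_eq hmk i j
      · rw [hu.2, hu'.2]
      · rw [hu.1 h, hu'.1 h]
  have hz0 : z = 0 := Matrix.ext hz
  exact Units.ext (sub_eq_zero.1 (by rw [← huz, hz0, mul_zero]))

end Integral

section Topology

variable (n) (F : Type*) [NormedField F] [IsUltrametricDist F]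

theorem coe_integer_valuation_eq_closedBall :
    ((NormedField.valuation (K := F)).integer : Set F) = Metric.closedBall 0 1 := by
  ext x
  rw [mem_closedBall_zero_iff]
  rfl

theorem isOpen_integralGL : IsOpen (integralGL n (NormedField.valuation (K := F)) : Set (GL n F)) :=
  Submonoid.isOpen_units <| IsOpen.matrix <| by
    change IsOpen ((NormedField.valuation (K := F)).integer : Set F)
    rw [coe_integer_valuation_eq_closedBall]
    exact IsUltrametricDist.isOpen_closedBall 0 one_ne_zero

theorem isCompact_integralGL [ProperSpace F] :
    IsCompact (integralGL n (NormedField.valuation (K := F)) : Set (GL n F)) :=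
  Submonoid.units_isCompact <| IsCompact.matrix <| by
    change IsCompact ((NormedField.valuation (K := F)).integer : Set F)
    rw [coe_integer_valuation_eq_closedBall]
    exact isCompact_closedBall 0 1

end Topology

section Padic

variable (n) in
/-- `GL n ℤ_[p]` as a subgroup of `GL n ℚ_[p]`; for `n = Fin 3` its carrier is `padicK p`. -/
abbrev padicIntegralGL : Subgroup (GL n ℚ_[p]) :=
  integralGL n NormedField.valuation

/-- The uniformizer `p` as a unit of `ℚ_[p]`, so that diagonal matrices of its powers are
invertible. -/
def padicUniformizer : ℚ_[p]ˣ :=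
  Units.mk0 (p : ℚ_[p]) (Nat.cast_ne_zero.2 (Fact.out : p.Prime).ne_zero)

/-- The diagonal matrix with entries `p ^ l i`, representing a double coset of
`padicIntegralGL p n`; `padicDiag p a b c` is the case `l = ![a, b, c]`. -/
def padicDiagonal (l : n → ℤ) : GL n ℚ_[p] :=
  diagonalGL fun i ↦ padicUniformizer p ^ l i

/-- The double coset of `padicDiagonal p l`, generalizing `padicDoubleCoset p a b c` to rank `n`. -/
abbrev padicDiagonalDoubleCoset (l : n → ℤ) : Set (GL n ℚ_[p]) :=
  doubleCoset (padicDiagonal p l) (padicIntegralGL p n) (padicIntegralGL p n)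

variable {p}

theorem norm_padicUniformizer_zpow (m : ℤ) :
    ‖((padicUniformizer p ^ m : ℚ_[p]ˣ) : ℚ_[p])‖ = (p : ℝ) ^ (-m) := by
  rw [Units.val_zpow_eq_zpow_val]
  exact Padic.norm_p_zpow m

theorem norm_padicUniformizer_zpow_div (l m : ℤ) :
    ‖((padicUniformizer p ^ l : ℚ_[p]ˣ) : ℚ_[p]) / ((padicUniformizer p ^ m : ℚ_[p]ˣ) : ℚ_[p])‖ =
      (p : ℝ) ^ (-(l - m)) := by
  rw [← Units.val_div_eq_div_val, div_eq_mul_inv, ← _root_.zpow_sub, norm_padicUniformizer_zpow]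

theorem padicDiagonal_inv (l : n → ℤ) : (padicDiagonal p l)⁻¹ = padicDiagonal p (-l) := by
  rw [padicDiagonal, diagonalGL_inv, padicDiagonal]
  congr 1
  ext i : 1
  exact (_root_.zpow_neg _ _).symm

theorem isCompact_padicDiagonalDoubleCoset (l : n → ℤ) :
    IsCompact (padicDiagonalDoubleCoset p l) :=
  ((isCompact_integralGL n ℚ_[p]).mul isCompact_singleton).mul (isCompact_integralGL n ℚ_[p])

theorem norm_apply_le_of_mem_padicDiagonalDoubleCoset {l : n → ℤ} {m : ℤ} (hl : ∀ i, m ≤ l i)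
    {g : GL n ℚ_[p]} (hg : g ∈ padicDiagonalDoubleCoset p l) (i j : n) :
    ‖g i j‖ ≤ (p : ℝ) ^ (-m) := by
  refine map_apply_le_of_mem_doubleCoset (r := (p : NNReal) ^ (-m)) (fun i ↦ ?_) hg i j
  rw [NormedField.valuation_apply, ← NNReal.coe_le_coe, coe_nnnorm, norm_padicUniformizer_zpow,
    NNReal.coe_zpow, NNReal.coe_natCast]
  gcongr
  · exact_mod_cast (Fact.out : p.Prime).one_le
  · exact hl i

theorem zpow_le_norm_div_norm_of_isUpperTriangular [LinearOrder n] {l : n → ℤ} {m M : ℤ}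
    (hm : ∀ i, m ≤ l i) (hM : ∀ i, l i ≤ M) {b : GL n ℚ_[p]}
    (hb : (b : Matrix n n ℚ_[p]).IsUpperTriangular)
    (hmem : b⁻¹ ∈ padicDiagonalDoubleCoset p l) (i j : n) :
    (p : ℝ) ^ (m - M) ≤ ‖b j j‖ / ‖b i i‖ := by
  have hp : (p : ℝ) ≠ 0 := Nat.cast_ne_zero.2 (Fact.out : p.Prime).ne_zero
  have hmem' : b ∈ padicDiagonalDoubleCoset p (-l) := by
    simpa only [inv_inv, padicDiagonal_inv] using inv_mem_doubleCoset_inv hmem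
  have hi : ‖b i i‖ ≤ (p : ℝ) ^ M := by
    simpa using norm_apply_le_of_mem_padicDiagonalDoubleCoset (fun i ↦ neg_le_neg (hM i)) hmem' i i
  have hj : ‖b⁻¹ j j‖ ≤ (p : ℝ) ^ (-m) :=
    norm_apply_le_of_mem_padicDiagonalDoubleCoset hm hmem j j
  have hne : b i i ≠ 0 :=
    left_ne_zero_of_mul_eq_one (apply_self_mul_inv_apply_self_of_isUpperTriangular hb i)
  have hjj : ‖b j j‖ * ‖b⁻¹ j j‖ = 1 := by
    rw [← norm_mul, apply_self_mul_inv_apply_self_of_isUpperTriangular hb j, norm_one]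
  rw [le_div_iff₀ (norm_pos_iff.2 hne)]
  calc (p : ℝ) ^ (m - M) * ‖b i i‖ ≤ (p : ℝ) ^ (m - M) * (p : ℝ) ^ M := by gcongr
    _ = (p : ℝ) ^ m * (‖b j j‖ * ‖b⁻¹ j j‖) := by
        rw [← zpow_add₀ hp, sub_add_cancel, hjj, mul_one]
    _ ≤ (p : ℝ) ^ m * (‖b j j‖ * (p : ℝ) ^ (-m)) := by gcongr
    _ = ‖b j j‖ := by
        rw [mul_left_comm, ← zpow_add₀ hp, add_neg_cancel, zpow_zero, mul_one]

theorem eq_of_norm_intCast_sub_le {m : ℤ} {x y : ℕ} (hx : x < p ^ m.toNat) (hy : y < p ^ m.toNat)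
    (h : ‖((x : ℤ) : ℚ_[p]) - (y : ℤ)‖ ≤ (p : ℝ) ^ (-m)) : x = y := by
  have hle : ‖(((x : ℤ) - (y : ℤ) : ℤ) : ℚ_[p])‖ ≤ (p : ℝ) ^ (-(m.toNat : ℤ)) := by
    rcases le_total 0 m with hm | hm
    · rwa [Int.cast_sub, Int.toNat_of_nonneg hm]
    · simpa [Int.toNat_of_nonpos hm] using Padic.norm_int_le_one (p := p) ((x : ℤ) - (y : ℤ))
  rw [Padic.norm_int_le_pow_iff_dvd, ← Nat.cast_pow] at hle
  have hzero := Int.eq_zero_of_dvd_of_natAbs_lt_natAbs hle (by omega)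
  omega

theorem pow_mul_measure_le_measure_padicDiagonalDoubleCoset [LinearOrder n]
    [MeasurableSpace (GL n ℚ_[p])] [BorelSpace (GL n ℚ_[p])] (μ : Measure (GL n ℚ_[p]))
    [μ.IsMulLeftInvariant] (l : n → ℤ) :
    (p ^ ∑ i, ∑ j with i < j, (l i - l j).toNat : ℕ) * μ (padicIntegralGL p n) ≤
      μ (padicDiagonalDoubleCoset p l) := by
  let u (x : ∀ i, ∀ j : {j // i < j}, Fin (p ^ (l i - l j).toNat)) : GL n ℚ_[p] :=
    SpecialLinearGroup.mapGL ℚ_[p] (unitriangular fun i j ↦ ((x i j : ℕ) : ℤ))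
  have hu_apply x {i j} (h : i < j) : u x i j = ((x i ⟨j, h⟩ : ℕ) : ℤ) :=
    mapGL_unitriangular_apply_of_lt _ h
  have hu_unitriangular x : IsUpperUnitriangular (u x : Matrix n n ℚ_[p]) :=
    isUpperUnitriangular_mapGL_unitriangular _
  have hdigit x y i j (h : i < j) (hle : ‖u x i j - u y i j‖ ≤ (p : ℝ) ^ (-(l i - l j))) :
      x i ⟨j, h⟩ = y i ⟨j, h⟩ := by
    rw [hu_apply x h, hu_apply y h] at hle
    exact Fin.ext (eq_of_norm_intCast_sub_le (Fin.isLt _) (Fin.isLt _) hle)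
  have hinj : Function.Injective fun x ↦
      (↑(u x * padicDiagonal p l) : GL n ℚ_[p] ⧸ padicIntegralGL p n) := fun x y hxy ↦ by
    have huxy : u y = u x := eq_of_mk_mul_diagonalGL_eq (hu_unitriangular y) (hu_unitriangular x)
      hxy fun i j h hle ↦ by
        rw [hu_apply x h, hu_apply y h, hdigit y x i j h]
        exact (NNReal.coe_le_coe.2 hle).trans_eq (norm_padicUniformizer_zpow_div _ _)
    funext i ⟨j, h⟩
    refine hdigit x y i j h ?_
    rw [huxy, sub_self, norm_zero]
    positivity
  have hcard : Fintype.card (∀ i, ∀ j : {j // i < j}, Fin (p ^ (l i - l j).toNat)) =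
      p ^ ∑ i, ∑ j with i < j, (l i - l j).toNat := by
    simp only [Fintype.card_pi, Fintype.card_fin, Finset.prod_pow_eq_pow_sum]
    congr! 2 with i
    exact (Finset.sum_subtype {j | i < j} (by simp) fun j ↦ (l i - l j).toNat).symm
  rw [← hcard]
  exact card_mul_measure_le_of_injective_mk μ (isOpen_integralGL n ℚ_[p]).measurableSet hinj
    fun x k hk ↦ mem_doubleCoset.2 ⟨u x, mapGL_int_mem_integralGL _, k, hk, rfl⟩

end Padic

section RankThree

instance : BorelSpace (GL (Fin 3) ℚ_[p]) := ⟨rfl⟩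

theorem padicK_eq_coe_padicIntegralGL : padicK p = (padicIntegralGL p (Fin 3) : Set _) := by
  have hinj : Function.Injective
      (RingHom.mapMatrix (m := Fin 3) (PadicInt.Coe.ringHom (p := p))) :=
    Matrix.map_injective Subtype.val_injective
  refine Set.Subset.antisymm ?_ fun g hg ↦ ?_
  · rintro _ ⟨u, rfl⟩
    exact ⟨fun i j ↦ (u.val i j).2, fun i j ↦ (u.inv i j).2⟩
  · obtain ⟨hle, hinv_le⟩ := mem_integralGL.1 hg
    let A : Matrix (Fin 3) (Fin 3) ℤ_[p] := of fun i j ↦ ⟨g i j, hle i j⟩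
    let B : Matrix (Fin 3) (Fin 3) ℤ_[p] := of fun i j ↦ ⟨g⁻¹ i j, hinv_le i j⟩
    exact ⟨⟨A, B, hinj (by rw [map_mul, map_one]; exact g.mul_inv),
      hinj (by rw [map_mul, map_one]; exact g.inv_mul)⟩, Units.ext rfl⟩

theorem padicDiag_eq_padicDiagonal (a b c : ℤ) :
    padicDiag p a b c = padicDiagonal p ![a, b, c] := by
  refine Units.ext (congrArg diagonal (funext fun i ↦ ?_))
  change _ = ((padicUniformizer p ^ ![a, b, c] i : ℚ_[p]ˣ) : ℚ_[p])
  rw [Units.val_zpow_eq_zpow_val]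
  fin_cases i <;> rfl

theorem padicDoubleCoset_eq_padicDiagonalDoubleCoset (a b c : ℤ) :
    padicDoubleCoset p a b c = padicDiagonalDoubleCoset p ![a, b, c] := by
  ext x
  rw [padicDiagonalDoubleCoset, mem_doubleCoset, ← padicK_eq_coe_padicIntegralGL,
    ← padicDiag_eq_padicDiagonal]
  rfl

theorem isCompact_padicDoubleCoset (a b c : ℤ) : IsCompact (padicDoubleCoset p a b c) := by
  rw [padicDoubleCoset_eq_padicDiagonalDoubleCoset]
  exact isCompact_padicDiagonalDoubleCoset _

variable {p} {μ : Measure (GL (Fin 3) ℚ_[p])} {Ap : GL (Fin 3) ℚ_[p] → ℤ × ℤ × ℤ}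

theorem zpow_le_measureReal_padicDoubleCoset [μ.IsMulLeftInvariant]
    [IsFiniteMeasureOnCompacts μ] (hμ : μ (padicK p) = 1) {a b c : ℤ} (hab : b ≤ a) (hbc : c ≤ b) :
    (p : ℝ) ^ (2 * (a - c)) ≤ μ.real (padicDoubleCoset p a b c) := by
  have hle := pow_mul_measure_le_measure_padicDiagonalDoubleCoset μ ![a, b, c]
  rw [← padicK_eq_coe_padicIntegralGL, hμ, mul_one,
    ← padicDoubleCoset_eq_padicDiagonalDoubleCoset] at hle
  have hexp : ∑ i, ∑ j with i < j, (![a, b, c] i - ![a, b, c] j).toNat =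
      (a - b).toNat + (a - c).toNat + (b - c).toNat := by
    simp [Finset.sum_filter, Fin.sum_univ_three]
  have htwo : 2 * (a - c) = (((a - b).toNat + (a - c).toNat + (b - c).toNat : ℕ) : ℤ) := by omega
  rw [htwo, zpow_natCast, ← Nat.cast_pow, ← hexp, ← ENNReal.toReal_natCast]
  exact ENNReal.toReal_mono (isCompact_padicDoubleCoset p a b c).measure_ne_top hle

namespace IsPadicIwasawaCoord

theorem exists_isUpperTriangular (hAp : IsPadicIwasawaCoord p Ap) (g : GL (Fin 3) ℚ_[p]) :
    ∃ b : GL (Fin 3) ℚ_[p], (b : Matrix (Fin 3) (Fin 3) ℚ_[p]).IsUpperTriangular ∧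
      ∃ k ∈ padicIntegralGL p (Fin 3), g = b * k ∧ ∀ k' ∈ padicIntegralGL p (Fin 3),
        Ap (b * k') = ((b 0 0).valuation, (b 1 1).valuation, (b 2 2).valuation) := by
  obtain ⟨k, hk, hb⟩ := exists_mem_integralGL_isUpperTriangular_mul NormedField.valuation g
  refine ⟨g * k, hb, k⁻¹, inv_mem hk, by group, fun k' hk' ↦ ?_⟩
  rw [← SetLike.mem_coe, ← padicK_eq_coe_padicIntegralGL] at hk'
  exact hAp _ _ k' hk' (fun i j hij ↦ hb hij) rfl

theorem apply_mul_of_mem (hAp : IsPadicIwasawaCoord p Ap) (g : GL (Fin 3) ℚ_[p])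
    {k : GL (Fin 3) ℚ_[p]} (hk : k ∈ padicIntegralGL p (Fin 3)) : Ap (g * k) = Ap g := by
  obtain ⟨b, -, k₀, hk₀, rfl, hb⟩ := hAp.exists_isUpperTriangular g
  rw [mul_assoc, hb _ (mul_mem hk₀ hk), hb _ hk₀]

theorem continuous (hAp : IsPadicIwasawaCoord p Ap) : Continuous Ap :=
  continuous_of_forall_mul_mem_eq (isOpen_integralGL (Fin 3) ℚ_[p]) fun g _ ↦
    hAp.apply_mul_of_mem g

theorem zpow_le_of_inv_mem_padicDoubleCoset (hAp : IsPadicIwasawaCoord p Ap) {a b c : ℤ}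
    (hab : b ≤ a) (hbc : c ≤ b) {g : GL (Fin 3) ℚ_[p]} (hg : g⁻¹ ∈ padicDoubleCoset p a b c) :
    (p : ℝ) ^ (c - a) ≤ (p : ℝ) ^ ((Ap g).1 - (Ap g).2.2) := by
  obtain ⟨b', hupper, k, hk, rfl, hb'⟩ := hAp.exists_isUpperTriangular g
  rw [padicDoubleCoset_eq_padicDiagonalDoubleCoset] at hg
  have hmem : b'⁻¹ ∈ padicDiagonalDoubleCoset p ![a, b, c] := by
    simpa using mul_mem_doubleCoset hk hg (one_mem _)
  have hne i : b' i i ≠ 0 :=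
    left_ne_zero_of_mul_eq_one (apply_self_mul_inv_apply_self_of_isUpperTriangular hupper i)
  have hp : (p : ℝ) ≠ 0 := Nat.cast_ne_zero.2 (Fact.out : p.Prime).ne_zero
  calc (p : ℝ) ^ (c - a) ≤ ‖b' 2 2‖ / ‖b' 0 0‖ :=
        zpow_le_norm_div_norm_of_isUpperTriangular
          (by simp [Fin.forall_fin_succ, hbc, hbc.trans hab])
          (by simp [Fin.forall_fin_succ, hab, hbc.trans hab]) hupper hmem 0 2
    _ = (p : ℝ) ^ ((Ap (b' * k)).1 - (Ap (b' * k)).2.2) := by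
        rw [hb' k hk, Padic.norm_eq_zpow_neg_valuation (hne 0),
          Padic.norm_eq_zpow_neg_valuation (hne 2), ← zpow_sub₀ hp]
        congr 1
        ring

theorem continuous_padicPhiZero (hAp : IsPadicIwasawaCoord p Ap) :
    Continuous (padicPhiZero p μ Ap) :=
  continuous_of_forall_mul_mem_eq (isOpen_integralGL (Fin 3) ℚ_[p]) fun g k hk ↦ by
    simp only [padicPhiZero, ← mul_assoc, hAp.apply_mul_of_mem _ hk]

theorem zpow_le_padicPhiZero_inv [IsFiniteMeasureOnCompacts μ] (hAp : IsPadicIwasawaCoord p Ap)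
    (hμ : μ (padicK p) = 1) {a b c : ℤ} (hab : b ≤ a) (hbc : c ≤ b) {y : GL (Fin 3) ℚ_[p]}
    (hy : y ∈ padicDoubleCoset p a b c) :
    (p : ℝ) ^ (c - a) ≤ padicPhiZero p μ Ap y⁻¹ := by
  have hK : IsCompact (padicK p) := by
    rw [padicK_eq_coe_padicIntegralGL]
    exact isCompact_integralGL (Fin 3) ℚ_[p]
  have hcont : Continuous fun k ↦ (p : ℝ) ^ ((Ap (k * y⁻¹)).1 - (Ap (k * y⁻¹)).2.2) :=
    (continuous_of_discreteTopology (f := fun t : ℤ × ℤ × ℤ ↦ (p : ℝ) ^ (t.1 - t.2.2))).comp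
      (hAp.continuous.comp (continuous_mul_const y⁻¹))
  have hle : ∀ k ∈ padicK p, (p : ℝ) ^ (c - a) ≤
      (p : ℝ) ^ ((Ap (k * y⁻¹)).1 - (Ap (k * y⁻¹)).2.2) := fun k hk ↦ by
    refine hAp.zpow_le_of_inv_mem_padicDoubleCoset hab hbc ?_
    rw [padicK_eq_coe_padicIntegralGL] at hk
    rw [padicDoubleCoset_eq_padicDiagonalDoubleCoset] at hy ⊢
    simpa using mul_mem_doubleCoset (one_mem _) hy (inv_mem hk)
  have hint := setIntegral_ge_of_const_le_real hK.measurableSet (hK.measure_ne_top (μ := μ)) hle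
    (hcont.continuousOn.integrableOn_compact hK)
  rwa [measureReal_def, hμ, ENNReal.toReal_one, mul_one] at hint

end IsPadicIwasawaCoord

theorem padicConv_padicPhi_one (h : GL (Fin 3) ℚ_[p] → ℝ) (a b c : ℤ) :
    padicConv p μ (padicPhi p a b c) h 1 = ∫ y in padicDoubleCoset p a b c, h y⁻¹ ∂μ := by
  rw [← integral_indicator (isCompact_padicDoubleCoset p a b c).measurableSet]
  refine integral_congr_ae (.of_forall fun y ↦ ?_)
  by_cases hy : y ∈ padicDoubleCoset p a b c <;> simp [padicPhi, hy]

end RankThree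

/-- for all `a ≥ b ≥ c`, one has `(Φ_p(a,b,c) * φ₀)(e) ≥ p^{a−c}`. -/
theorem statement5 (μ : Measure (GL (Fin 3) ℚ_[p])) [μ.IsHaarMeasure]
    (hμ : μ (padicK p) = 1)
    (Ap : GL (Fin 3) ℚ_[p] → ℤ × ℤ × ℤ) (hAp : IsPadicIwasawaCoord p Ap)
    (a b c : ℤ) (hab : b ≤ a) (hbc : c ≤ b) :
    (p : ℝ) ^ (a - c) ≤ padicConv p μ (padicPhi p a b c) (padicPhiZero p μ Ap) 1 := by
  rw [padicConv_padicPhi_one]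
  have hcompact := isCompact_padicDoubleCoset p a b c
  have hp : (p : ℝ) ≠ 0 := Nat.cast_ne_zero.2 (Fact.out : p.Prime).ne_zero
  calc (p : ℝ) ^ (a - c) = (p : ℝ) ^ (c - a) * (p : ℝ) ^ (2 * (a - c)) := by
        rw [← zpow_add₀ hp]; ring_nf
    _ ≤ (p : ℝ) ^ (c - a) * μ.real (padicDoubleCoset p a b c) := by
        gcongr; exact zpow_le_measureReal_padicDoubleCoset hμ hab hbc
    _ ≤ ∫ y in padicDoubleCoset p a b c, padicPhiZero p μ Ap y⁻¹ ∂μ :=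
        setIntegral_ge_of_const_le_real hcompact.measurableSet hcompact.measure_ne_top
          (fun y hy ↦ hAp.zpow_le_padicPhiZero_inv hμ hab hbc hy)
          ((hAp.continuous_padicPhiZero.comp continuous_inv).continuousOn.integrableOn_compact
            hcompact)

end
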